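/- (Deligne's formality criterion.) Let E be a differential graded algebra over a field equipped with an additional ℤ-grading E^i = ⊕_{j∈ℤ} E^{i,j} which is respected by the differential and multiplication. If for each i the cohomology H^i(E) is concentrated in additional-grading degree i (i.e. H^i(E) = H^i(E)^{i}), then E is formal: E is quasi-isomorphic, as a dg-algebra, to its cohomology H^*(E) regarded as a dg-algebra with trivial differential. -/

import Mathlib

/-!
STATEMENT 17 (Deligne's formality criterion).

Let `E` be a differential graded algebra over a field `k`, equipped with an additional
`ℤ`-grading `E^i = ⊕_j E^{i,j}` respected by the differential and the multiplication.  If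
for each `i` the cohomology `H^i(E)` is concentrated in additional-grading degree `i`, then
`E` is formal: quasi-isomorphic, as a dg-algebra, to its cohomology `H^*(E)` with trivial
differential.

Modelling:

* a dg-algebra over `k` is a `k`-algebra `E` with a `ℤ`-grading by `k`-submodules making it
  a graded algebra, and a `k`-linear differential `d` of degree `+1` with `d² = 0` and the
  Leibniz rule `d(xy) = d(x)y + (−1)^i x d(y)` for `x ∈ E^i` (structure `DGA`);
* a morphism of dg-algebras is a `k`-algebra homomorphism preserving the grading and
  commuting with the differentials (structure `DGAHom`); it is a quasi-isomorphism when it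
  induces a bijection on cohomology `ker d / im d` (`IsQuasiIso`, stated without quotients);
* `E` is *formal* iff it is connected to a dg-algebra with zero differential by a zigzag of
  quasi-isomorphisms (`Formal`); a dg-algebra with zero differential quasi-isomorphic to `E`
  is automatically isomorphic to the cohomology algebra `H^*(E)` with trivial differential,
  so this is equivalent to the usual definition of formality;
* the additional grading is a second algebra grading `aux` such that each `E^i` is the sum
  of the pieces `E^{i,j} = E^i ⊓ aux j`, with `d(E^{i,j}) ⊆ E^{i+1,j}`;
* "`H^i(E)` is concentrated in additional degree `i`" is rendered as: for `j ≠ i`, every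
  cocycle in `E^{i,j}` is a coboundary.
-/

/-- A differential graded algebra over the field `k`. -/
structure DGA (k : Type) [Field k] where
  /-- the underlying type -/
  carrier : Type
  [ring : Ring carrier]
  [alg : Algebra k carrier]
  /-- the grading `E = ⊕ᵢ Eⁱ` -/
  grading : ℤ → Submodule k carrier
  [graded : GradedAlgebra grading]
  /-- the differential -/
  d : carrier →ₗ[k] carrier
  d_degree : ∀ i : ℤ, ∀ x ∈ grading i, d x ∈ grading (i + 1)
  d_squared : ∀ x, d (d x) = 0
  leibniz : ∀ (i : ℤ) (x y : carrier), x ∈ grading i →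
    d (x * y) = d x * y + ((-1 : k) ^ i) • (x * d y)

attribute [instance] DGA.ring DGA.alg DGA.graded

/-- A morphism of differential graded algebras over `k`. -/
structure DGAHom {k : Type} [Field k] (E F : DGA k) where
  /-- the underlying algebra homomorphism -/
  toAlgHom : E.carrier →ₐ[k] F.carrier
  map_grading : ∀ (i : ℤ), ∀ x ∈ E.grading i, toAlgHom x ∈ F.grading i
  comm_d : ∀ x, toAlgHom (E.d x) = F.d (toAlgHom x)

/-- A morphism of dg-algebras is a quasi-isomorphism if it induces a bijection on
cohomology `ker d / im d` (surjectivity and injectivity modulo coboundaries). -/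
def DGAHom.IsQuasiIso {k : Type} [Field k] {E F : DGA k} (f : DGAHom E F) : Prop :=
  (∀ y : F.carrier, F.d y = 0 → ∃ x : E.carrier, E.d x = 0 ∧
    ∃ z : F.carrier, y = f.toAlgHom x + F.d z) ∧
  (∀ x : E.carrier, E.d x = 0 → (∃ z : F.carrier, f.toAlgHom x = F.d z) →
    ∃ w : E.carrier, x = E.d w)

/-- Two dg-algebras are related by `QIso` if there is a quasi-isomorphism from one to the
other. -/
def QIso {k : Type} [Field k] (E F : DGA k) : Prop :=
  ∃ f : DGAHom E F, f.IsQuasiIso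

/-- `E` is formal: it is connected by a zigzag of quasi-isomorphisms to a dg-algebra with
zero differential (necessarily isomorphic to its cohomology `H^*(E)` with trivial
differential). -/
def DGA.Formal {k : Type} [Field k] (E : DGA k) : Prop :=
  ∃ Z : DGA k, Z.d = 0 ∧ Relation.EqvGen QIso E Z

namespace DeligneAux

/-- Build a graded algebra from projections. -/
noncomputable def gradedOf {k A : Type} [Field k] [Ring A] [Algebra k A]
    (G : ℤ → Submodule k A) (h1 : (1 : A) ∈ G 0)
    (hmul : ∀ i j x y, x ∈ G i → y ∈ G j → x * y ∈ G (i + j))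
    (q : ℤ → A →ₗ[k] A) (hq : ∀ i, ∀ x ∈ G i, q i x = x)
    (hq' : ∀ i j, i ≠ j → ∀ x ∈ G j, q i x = 0)
    (htop : ∀ x, x ∈ ⨆ i, G i) : GradedAlgebra G :=
  have hint : DirectSum.IsInternal G := by
    rw [DirectSum.isInternal_submodule_iff_iSupIndep_and_iSup_eq_top]
    refine ⟨fun i => ?_, eq_top_iff.2 fun x _ => htop x⟩
    rw [Submodule.disjoint_def]
    intro x hx hx'
    have hle : (⨆ j, ⨆ (_ : j ≠ i), G j) ≤ LinearMap.ker (q i) :=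
      iSup₂_le fun j hj y hy => hq' i j hj.symm y hy
    rw [← hq i x hx]
    exact hle hx'
  { (DirectSum.IsInternal.chooseDecomposition G hint) with
    one_mem := h1
    mul_mem := fun {i j x y} hx hy => hmul i j x y hx hy }

section Proj
variable {k A : Type} [Field k] [Ring A] [Algebra k A] (G : ℤ → Submodule k A) [GradedAlgebra G]

lemma proj_mem (i : ℤ) (x : A) : GradedAlgebra.proj G i x ∈ G i := by
  rw [GradedAlgebra.proj_apply]; exact SetLike.coe_mem _

lemma proj_same {i : ℤ} {x : A} (h : x ∈ G i) : GradedAlgebra.proj G i x = x := by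
  rw [GradedAlgebra.proj_apply]; exact DirectSum.decompose_of_mem_same _ h

lemma proj_ne {i j : ℤ} {x : A} (h : x ∈ G j) (hij : i ≠ j) : GradedAlgebra.proj G i x = 0 := by
  rw [GradedAlgebra.proj_apply]; exact DirectSum.decompose_of_mem_ne _ h hij.symm

lemma mem_of_proj (N : Submodule k A) (x : A) (h : ∀ i, GradedAlgebra.proj G i x ∈ N) :
    x ∈ N := by
  classical
  rw [← DirectSum.sum_support_decompose G x]
  exact N.sum_mem fun i _ => h i

lemma top_of (x : A) : x ∈ ⨆ i, G i :=
  mem_of_proj G _ x fun i => Submodule.mem_iSup_of_mem i (proj_mem G i x)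

lemma ext_of_homog {f g : A →ₗ[k] A} (h : ∀ i, ∀ x ∈ G i, f x = g x) (x : A) : f x = g x := by
  have : (⨆ i, G i) ≤ LinearMap.eqLocus f g := iSup_le fun i y hy => h i y hy
  exact this (top_of G x)

end Proj

variable {k : Type} [Field k]

lemma d_one (E : DGA k) : E.d 1 = 0 := by
  have h := E.leibniz 0 1 1 SetLike.GradedOne.one_mem
  simpa using h

lemma d_proj (E : DGA k) (i : ℤ) (x : E.carrier) :
    E.d (GradedAlgebra.proj E.grading i x) = GradedAlgebra.proj E.grading (i + 1) (E.d x) := by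
  refine ext_of_homog E.grading (f := E.d ∘ₗ GradedAlgebra.proj E.grading i)
    (g := GradedAlgebra.proj E.grading (i + 1) ∘ₗ E.d) (fun j y hy => ?_) x
  simp only [LinearMap.comp_apply]
  by_cases h : i = j
  · subst h
    rw [proj_same _ hy, proj_same _ (E.d_degree _ _ hy)]
  · rw [proj_ne _ hy h, proj_ne _ (E.d_degree _ _ hy) (by omega), map_zero]

/-- Sub-dg-algebra. -/
noncomputable def subDGA (E : DGA k) (F : Subalgebra k E.carrier)
    (hF : ∀ i, ∀ x ∈ F, GradedAlgebra.proj E.grading i x ∈ F)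
    (hdF : ∀ x ∈ F, E.d x ∈ F) : DGA k :=
  letI G : ℤ → Submodule k F := fun i => (E.grading i).comap F.val.toLinearMap
  letI q : ℤ → F →ₗ[k] F := fun i =>
    ((GradedAlgebra.proj E.grading i).restrict (p := Subalgebra.toSubmodule F)
      (q := Subalgebra.toSubmodule F) (hF i))
  letI : GradedAlgebra G := gradedOf G
    (SetLike.GradedOne.one_mem (A := E.grading))
    (fun i j x y hx hy => SetLike.GradedMul.mul_mem (A := E.grading) hx hy)
    q (fun i x hx => Subtype.ext (proj_same E.grading hx))
    (fun i j hij x hx => Subtype.ext (proj_ne E.grading hx hij))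
    (fun x => by
      classical
      have : x = ∑ i ∈ (DirectSum.decompose E.grading (x : E.carrier)).support, q i x := by
        apply Subtype.ext
        rw [AddSubmonoidClass.coe_finsetSum]
        exact (DirectSum.sum_support_decompose E.grading (x : E.carrier)).symm
      rw [this]
      exact Submodule.sum_mem _ fun i _ => Submodule.mem_iSup_of_mem i
        (proj_mem E.grading i (x : E.carrier)))
  { carrier := F
    grading := G
    d := E.d.restrict (p := Subalgebra.toSubmodule F) (q := Subalgebra.toSubmodule F) hdF
    d_degree := fun i x hx => E.d_degree i x hx
    d_squared := fun x => Subtype.ext (E.d_squared x)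
    leibniz := fun i x y hx => Subtype.ext (E.leibniz i x y hx) }

/-- Quotient with zero differential. -/
noncomputable def quotDGA (E : DGA k) (I : Ideal E.carrier) [I.IsTwoSided]
    (hI : ∀ i, ∀ x ∈ I, GradedAlgebra.proj E.grading i x ∈ I) : DGA k :=
  letI mk : E.carrier →ₐ[k] E.carrier ⧸ I := Ideal.Quotient.mkₐ k I
  letI G : ℤ → Submodule k (E.carrier ⧸ I) := fun i => (E.grading i).map mk.toLinearMap
  letI q : ℤ → (E.carrier ⧸ I) →ₗ[k] (E.carrier ⧸ I) := fun i =>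
    { toFun := fun x => Quotient.map' (s₁ := Submodule.quotientRel I) (s₂ := Submodule.quotientRel I)
        (GradedAlgebra.proj E.grading i) (fun a b hab => by
          rw [Submodule.quotientRel_def] at hab ⊢
          rw [← map_sub]; exact hI i _ hab) x
      map_add' := by
        rintro ⟨a⟩ ⟨b⟩
        exact congrArg mk (map_add (GradedAlgebra.proj E.grading i) a b)
      map_smul' := by
        rintro c ⟨a⟩
        exact congrArg mk (map_smul (GradedAlgebra.proj E.grading i) c a) }
  letI : GradedAlgebra G := gradedOf G
    ⟨1, SetLike.GradedOne.one_mem (A := E.grading), map_one mk⟩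
    (by
      rintro i j _ _ ⟨x, hx, rfl⟩ ⟨y, hy, rfl⟩
      exact ⟨x * y, SetLike.GradedMul.mul_mem (A := E.grading) hx hy, map_mul mk x y⟩)
    q
    (by
      rintro i _ ⟨x, hx, rfl⟩
      exact congrArg mk (proj_same E.grading hx))
    (by
      rintro i j hij _ ⟨x, hx, rfl⟩
      exact (congrArg mk (proj_ne E.grading hx hij)).trans (map_zero mk))
    (fun x => by
      obtain ⟨y, rfl⟩ := Ideal.Quotient.mk_surjective x
      have := Submodule.mem_map_of_mem (f := mk.toLinearMap) (top_of E.grading y)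
      rw [Submodule.map_iSup] at this
      exact this)
  { carrier := E.carrier ⧸ I
    grading := G
    d := 0
    d_degree := fun i x hx => Submodule.zero_mem _
    d_squared := fun x => rfl
    leibniz := fun i x y hx => by simp }

section Main
variable (E : DGA k) (aux : ℤ → Submodule k E.carrier)

/-- generators of the truncation -/
def S : Set E.carrier :=
  {x | ∃ i j, x ∈ E.grading i ∧ x ∈ aux j ∧ (i < j ∨ (i = j ∧ E.d x = 0))}

/-- generators of the ideal -/
def T : Set E.carrier :=
  {x | ∃ i j, x ∈ E.grading i ∧ x ∈ aux j ∧
    (i < j ∨ (i = j ∧ ∃ m, ∃ z ∈ E.grading m, x = E.d z))}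

lemma T_sub_S : T E aux ⊆ S E aux := by
  rintro x ⟨i, j, hi, hj, h | ⟨h, m, z, hz, rfl⟩⟩
  · exact ⟨i, j, hi, hj, Or.inl h⟩
  · exact ⟨i, j, hi, hj, Or.inr ⟨h, E.d_squared z⟩⟩

lemma d_S (hd : ∀ j : ℤ, ∀ x ∈ aux j, E.d x ∈ aux j) {x} (hx : x ∈ S E aux) :
    E.d x ∈ Submodule.span k (T E aux) := by
  obtain ⟨i, j, hi, hj, h | ⟨h, h0⟩⟩ := hx
  · apply Submodule.subset_span
    refine ⟨i + 1, j, E.d_degree _ _ hi, hd _ _ hj, ?_⟩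
    rcases lt_or_eq_of_le (show i + 1 ≤ j by omega) with h' | h'
    · exact Or.inl h'
    · exact Or.inr ⟨h', i, x, hi, rfl⟩
  · rw [h0]; exact Submodule.zero_mem _

variable [GradedAlgebra aux]

lemma S_mul_S {x y} (hx : x ∈ S E aux) (hy : y ∈ S E aux) : x * y ∈ S E aux := by
  obtain ⟨i, j, hi, hj, h⟩ := hx
  obtain ⟨i', j', hi', hj', h'⟩ := hy
  refine ⟨i + i', j + j', SetLike.GradedMul.mul_mem hi hi', SetLike.GradedMul.mul_mem hj hj', ?_⟩
  rcases h with h | ⟨h, h0⟩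
  · left; rcases h' with h' | h' <;> omega
  · rcases h' with h' | ⟨h', h0'⟩
    · left; omega
    · right; refine ⟨by omega, ?_⟩
      rw [E.leibniz i x y hi, h0, h0']; simp

lemma S_mul_T {x y} (hx : x ∈ S E aux) (hy : y ∈ T E aux) : x * y ∈ T E aux := by
  obtain ⟨i, j, hi, hj, h⟩ := hx
  obtain ⟨i', j', hi', hj', h'⟩ := hy
  refine ⟨i + i', j + j', SetLike.GradedMul.mul_mem hi hi', SetLike.GradedMul.mul_mem hj hj', ?_⟩
  rcases h with h | ⟨h, h0⟩
  · left; rcases h' with h' | h' <;> omega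
  · rcases h' with h' | ⟨h', m, z, hz, rfl⟩
    · left; omega
    · right
      refine ⟨by omega, i + m, ((-1 : k) ^ i)⁻¹ • (x * z),
        Submodule.smul_mem _ _ (SetLike.GradedMul.mul_mem hi hz), ?_⟩
      have hne : ((-1 : k) ^ i) ≠ 0 := zpow_ne_zero _ (by simp)
      rw [map_smul, E.leibniz i x z hi, h0, zero_mul, zero_add, smul_smul, inv_mul_cancel₀ hne,
        one_smul]

lemma T_mul_S {x y} (hx : x ∈ T E aux) (hy : y ∈ S E aux) : x * y ∈ T E aux := by
  obtain ⟨i, j, hi, hj, h⟩ := hx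
  obtain ⟨i', j', hi', hj', h'⟩ := hy
  refine ⟨i + i', j + j', SetLike.GradedMul.mul_mem hi hi', SetLike.GradedMul.mul_mem hj hj', ?_⟩
  rcases h with h | ⟨h, m, z, hz, rfl⟩
  · left; rcases h' with h' | h' <;> omega
  · rcases h' with h' | ⟨h', h0⟩
    · left; omega
    · right
      refine ⟨by omega, m + i', z * y, SetLike.GradedMul.mul_mem hz hi', ?_⟩
      rw [E.leibniz m z y hz, h0]; simp

lemma span_mul {A B C : Set E.carrier} (h : ∀ x ∈ A, ∀ y ∈ B, x * y ∈ C) {x y : E.carrier}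
    (hx : x ∈ Submodule.span k A) (hy : y ∈ Submodule.span k B) :
    x * y ∈ Submodule.span k C := by
  have := Submodule.mul_mem_mul hx hy
  rw [Submodule.span_mul_span] at this
  refine Submodule.span_mono ?_ this
  rintro _ ⟨a, ha, b, hb, rfl⟩
  exact h a ha b hb

/-- the truncation -/
def F : Subalgebra k E.carrier :=
  (Submodule.span k (S E aux)).toSubalgebra
    (Submodule.subset_span ⟨0, 0, SetLike.GradedOne.one_mem, SetLike.GradedOne.one_mem,
      Or.inr ⟨rfl, d_one E⟩⟩)
    (fun _ _ hx hy => span_mul E (fun _ ha _ hb => S_mul_S E aux ha hb) hx hy)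

lemma mem_F {x} : x ∈ F E aux ↔ x ∈ Submodule.span k (S E aux) := Iff.rfl

lemma span_proj {A : Set E.carrier} (h : ∀ x ∈ A, ∃ i, x ∈ E.grading i) (i : ℤ) {x}
    (hx : x ∈ Submodule.span k A) : GradedAlgebra.proj E.grading i x ∈ Submodule.span k A := by
  have : Submodule.span k A ≤ (Submodule.span k A).comap (GradedAlgebra.proj E.grading i) := by
    rw [Submodule.span_le]
    intro y hy
    obtain ⟨j, hj⟩ := h y hy
    change GradedAlgebra.proj E.grading i y ∈ Submodule.span k A
    by_cases hij : i = j
    · subst hij; rw [proj_same _ hj]; exact Submodule.subset_span hy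
    · rw [proj_ne _ hj hij]; exact Submodule.zero_mem _
  exact this hx

lemma span_T_le : Submodule.span k (T E aux) ≤ Submodule.span k (S E aux) :=
  Submodule.span_mono (T_sub_S E aux)

lemma d_F (hd : ∀ j : ℤ, ∀ x ∈ aux j, E.d x ∈ aux j) {x} (hx : x ∈ F E aux) :
    E.d x ∈ Submodule.span k (T E aux) := by
  have : Submodule.span k (S E aux) ≤ (Submodule.span k (T E aux)).comap E.d :=
    Submodule.span_le.2 fun y hy => d_S E aux hd hy
  exact this hx

/-- the bihomogeneous projection -/
noncomputable def P (i j : ℤ) : E.carrier →ₗ[k] E.carrier :=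
  GradedAlgebra.proj aux j ∘ₗ GradedAlgebra.proj E.grading i

lemma mem_of_P (N : Submodule k E.carrier) (x : E.carrier) (h : ∀ i j, P E aux i j x ∈ N) :
    x ∈ N :=
  mem_of_proj E.grading N x fun i => mem_of_proj aux N _ fun j => h i j

lemma P_mem_aux (i j : ℤ) (x : E.carrier) : P E aux i j x ∈ aux j := proj_mem _ _ _

lemma P_mem (hcompat : ∀ i : ℤ, E.grading i = ⨆ j : ℤ, E.grading i ⊓ aux j)
    (i j : ℤ) (x : E.carrier) : P E aux i j x ∈ E.grading i := by
  have key : E.grading i ≤ (E.grading i).comap (GradedAlgebra.proj aux j) := by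
    conv_lhs => rw [hcompat i]
    refine iSup_le fun l y hy => ?_
    change GradedAlgebra.proj aux j y ∈ E.grading i
    by_cases hjl : j = l
    · subst hjl; rw [proj_same _ hy.2]; exact hy.1
    · rw [proj_ne _ hy.2 hjl]; exact Submodule.zero_mem _
  exact key (proj_mem E.grading i x)

lemma P_same {i j : ℤ} {x : E.carrier} (hi : x ∈ E.grading i) (hj : x ∈ aux j) :
    P E aux i j x = x := by
  rw [P, LinearMap.comp_apply, proj_same _ hi, proj_same _ hj]

lemma P_ne {i j i' j' : ℤ} {x : E.carrier} (hi : x ∈ E.grading i') (hj : x ∈ aux j')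
    (h : ¬ (i = i' ∧ j = j')) : P E aux i j x = 0 := by
  rw [P, LinearMap.comp_apply]
  by_cases h1 : i = i'
  · subst h1; rw [proj_same _ hi, proj_ne _ hj (fun h2 => h ⟨rfl, h2⟩)]
  · rw [proj_ne _ hi h1, map_zero]

lemma d_P (hd : ∀ j : ℤ, ∀ x ∈ aux j, E.d x ∈ aux j) (i j : ℤ) (x : E.carrier) :
    E.d (P E aux i j x) = P E aux (i + 1) j (E.d x) := by
  rw [P, P, LinearMap.comp_apply, LinearMap.comp_apply, ← d_proj]
  refine ext_of_homog aux (f := E.d ∘ₗ GradedAlgebra.proj aux j)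
    (g := GradedAlgebra.proj aux j ∘ₗ E.d) (fun l y hy => ?_) _
  simp only [LinearMap.comp_apply]
  by_cases h : j = l
  · subst h
    rw [proj_same _ hy, proj_same _ (hd _ _ hy)]
  · rw [proj_ne _ hy h, proj_ne _ (hd _ _ hy) h, map_zero]

lemma F_low {i j : ℤ} (hij : j < i) {x} (hx : x ∈ F E aux) : P E aux i j x = 0 := by
  have : Submodule.span k (S E aux) ≤ LinearMap.ker (P E aux i j) := by
    rw [Submodule.span_le]
    rintro y ⟨a, b, ha, hb, h⟩
    refine P_ne E aux ha hb ?_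
    rcases h with h | h <;> omega
  exact this hx

lemma I_diag {i : ℤ} {x} (hx : x ∈ Submodule.span k (T E aux)) :
    P E aux i i x ∈ LinearMap.range E.d := by
  have : Submodule.span k (T E aux) ≤ (LinearMap.range E.d).comap (P E aux i i) := by
    rw [Submodule.span_le]
    rintro y ⟨a, b, ha, hb, h⟩
    change P E aux i i y ∈ LinearMap.range E.d
    by_cases hab : i = a ∧ i = b
    · obtain ⟨rfl, rfl⟩ := hab
      rw [P_same E aux ha hb]
      rcases h with h | ⟨_, m, z, _, rfl⟩
      · omega
      · exact ⟨z, rfl⟩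
    · rw [P_ne E aux ha hb hab]; exact Submodule.zero_mem _
  exact this hx

lemma key (hcompat : ∀ i : ℤ, E.grading i = ⨆ j : ℤ, E.grading i ⊓ aux j)
    (hd : ∀ j : ℤ, ∀ x ∈ aux j, E.d x ∈ aux j) {x} (hx : x ∈ F E aux)
    (h : ∀ i j, i ≤ j → P E aux i j x ∈ LinearMap.range E.d) : ∃ w ∈ F E aux, x = E.d w := by
  suffices x ∈ (Submodule.span k (S E aux)).map E.d by
    obtain ⟨w, hw, rfl⟩ := this
    exact ⟨w, hw, rfl⟩
  refine mem_of_P E aux _ x fun i j => ?_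
  rcases lt_or_ge j i with hij | hij
  · rw [F_low E aux hij hx]; exact Submodule.zero_mem _
  · obtain ⟨z, hz⟩ := h i j hij
    refine ⟨P E aux (i - 1) j z, Submodule.subset_span
      ⟨i - 1, j, P_mem E aux hcompat _ _ _, P_mem_aux E aux _ _ _, Or.inl (by omega)⟩, ?_⟩
    rw [d_P E aux hd, hz, sub_add_cancel]
    exact P_same E aux (P_mem E aux hcompat _ _ _) (P_mem_aux E aux _ _ _)

/-- the ideal -/
def I : Ideal (F E aux) where
  carrier := {x | (x : E.carrier) ∈ Submodule.span k (T E aux)}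
  add_mem' := fun ha hb => (Submodule.span k (T E aux)).add_mem ha hb
  zero_mem' := (Submodule.span k (T E aux)).zero_mem
  smul_mem' := fun c _ hx => span_mul E (fun _ ha _ hb => S_mul_T E aux ha hb) c.2 hx

instance : (I E aux).IsTwoSided :=
  ⟨fun {a} b ha => by
    change (a : E.carrier) * (b : E.carrier) ∈ Submodule.span k (T E aux)
    exact span_mul E (fun _ ha _ hb => T_mul_S E aux ha hb) ha b.2⟩

end Main

end DeligneAux

open DeligneAux in
theorem deligne_formality_criterion {k : Type} [Field k] (E : DGA k)
    -- an additional ℤ-grading, respected by the multiplication (a second algebra grading) ...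
    (aux : ℤ → Submodule k E.carrier) [GradedAlgebra aux]
    -- ... compatible with the original grading: Eⁱ = ⊕ⱼ E^{i,j} with E^{i,j} = Eⁱ ⊓ aux j ...
    (hcompat : ∀ i : ℤ, E.grading i = ⨆ j : ℤ, E.grading i ⊓ aux j)
    -- ... and respected by the differential:
    (hd : ∀ j : ℤ, ∀ x ∈ aux j, E.d x ∈ aux j)
    -- each Hⁱ(E) is concentrated in additional-grading degree i:
    (hconc : ∀ i j : ℤ, j ≠ i → ∀ x ∈ E.grading i ⊓ aux j, E.d x = 0 →
      ∃ z : E.carrier, x = E.d z) :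
    E.Formal := by
  have hFproj : ∀ i, ∀ x ∈ F E aux, GradedAlgebra.proj E.grading i x ∈ F E aux :=
    fun i x hx => span_proj E (A := S E aux) (fun y ⟨a, _, ha, _⟩ => ⟨a, ha⟩) i hx
  have hdF : ∀ x ∈ F E aux, E.d x ∈ F E aux := fun x hx => span_T_le E aux (d_F E aux hd hx)
  let D : DGA k := subDGA E (F E aux) hFproj hdF
  let v : D.carrier →ₐ[k] E.carrier := (F E aux).val
  let J : Ideal D.carrier := I E aux
  have : J.IsTwoSided := inferInstanceAs (I E aux).IsTwoSided
  have hDproj : ∀ i (x : D.carrier), v (GradedAlgebra.proj D.grading i x) =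
      GradedAlgebra.proj E.grading i (v x) := by
    intro i x
    have hle : (⨆ j, D.grading j) ≤ LinearMap.eqLocus
        (v.toLinearMap ∘ₗ GradedAlgebra.proj D.grading i)
        (GradedAlgebra.proj E.grading i ∘ₗ v.toLinearMap) := by
      refine iSup_le fun j y hy => ?_
      have hy' : v y ∈ E.grading j := hy
      change v (GradedAlgebra.proj D.grading i y) =
        GradedAlgebra.proj E.grading i (v y)
      by_cases hij : i = j
      · subst hij
        rw [proj_same _ hy, proj_same _ hy']
      · rw [proj_ne _ hy hij, proj_ne _ hy' hij]; rfl
    exact hle (top_of D.grading x)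
  have hJ : ∀ i, ∀ x ∈ J, GradedAlgebra.proj D.grading i x ∈ J := by
    intro i x hx
    change v (GradedAlgebra.proj D.grading i x) ∈ Submodule.span k (T E aux)
    rw [hDproj]
    exact span_proj E (A := T E aux) (fun y ⟨a, _, ha, _⟩ => ⟨a, ha⟩) i hx
  let Q : DGA k := quotDGA D J hJ
  let f : DGAHom D E := ⟨v, fun i x hx => hx, fun x => rfl⟩
  let g : DGAHom D Q := ⟨Ideal.Quotient.mkₐ k J, fun i x hx => ⟨x, hx, rfl⟩, fun x =>
    Ideal.Quotient.eq_zero_iff_mem.2 (d_F E aux hd x.2)⟩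
  have hf : f.IsQuasiIso := by
    constructor
    · intro y hy
      have : y ∈ (Submodule.span k (S E aux) ⊓ LinearMap.ker E.d) ⊔ LinearMap.range E.d := by
        refine mem_of_P E aux _ y fun i j => ?_
        have h0 : E.d (P E aux i j y) = 0 := by rw [d_P E aux hd, hy, map_zero]
        by_cases hij : j = i
        · exact Submodule.mem_sup_left ⟨Submodule.subset_span
            ⟨i, j, P_mem E aux hcompat _ _ _, P_mem_aux E aux _ _ _, Or.inr ⟨hij.symm, h0⟩⟩, h0⟩
        · obtain ⟨z, hz⟩ := hconc i j hij _
            ⟨P_mem E aux hcompat i j y, P_mem_aux E aux i j y⟩ h0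
          exact Submodule.mem_sup_right ⟨z, hz.symm⟩
      obtain ⟨x, ⟨hx, hx0⟩, _, ⟨z, rfl⟩, h⟩ := Submodule.mem_sup.1 this
      exact ⟨⟨x, hx⟩, Subtype.ext hx0, z, h.symm⟩
    · rintro x - ⟨z, hz⟩
      have hz' : v x = E.d z := hz
      obtain ⟨w, hw, h⟩ := key E aux hcompat hd (x := v x) x.2 (fun i j _ => by
        rw [hz', ← sub_add_cancel i 1, ← d_P E aux hd]
        exact ⟨_, rfl⟩)
      exact ⟨⟨w, hw⟩, Subtype.ext h⟩
  have hg : g.IsQuasiIso := by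
    constructor
    · intro y _
      obtain ⟨x, rfl⟩ := Ideal.Quotient.mk_surjective (I := J) y
      have hle : Submodule.span k (S E aux) ≤
          (Submodule.span k (S E aux) ⊓ LinearMap.ker E.d) ⊔ Submodule.span k (T E aux) := by
        rw [Submodule.span_le]
        rintro a ha
        obtain ⟨i, j, hi, hj, h | ⟨h, h0⟩⟩ := id ha
        · exact Submodule.mem_sup_right (Submodule.subset_span ⟨i, j, hi, hj, Or.inl h⟩)
        · exact Submodule.mem_sup_left ⟨Submodule.subset_span ha, h0⟩
      obtain ⟨a, ⟨ha, ha0⟩, b, hb, h⟩ := Submodule.mem_sup.1 (hle x.2)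
      refine ⟨⟨a, ha⟩, Subtype.ext ha0, 0, ?_⟩
      rw [map_zero, add_zero]
      refine Ideal.Quotient.eq.2 ?_
      change v x - a ∈ Submodule.span k (T E aux)
      have : v x = a + b := h.symm
      rw [this, add_sub_cancel_left]
      exact hb
    · rintro x hx0 ⟨z, hz⟩
      have hxJ : x ∈ J := Ideal.Quotient.eq_zero_iff_mem.1 hz
      have hx0' : E.d (v x) = 0 := congrArg v hx0
      obtain ⟨w, hw, h⟩ := key E aux hcompat hd (x := v x) x.2 (fun i j _ => by
        by_cases hij : j = i
        · subst hij
          exact I_diag E aux hxJ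
        · obtain ⟨z, hz⟩ := hconc i j hij _
            ⟨P_mem E aux hcompat i j _, P_mem_aux E aux i j (v x)⟩
            (by rw [d_P E aux hd, hx0', map_zero])
          exact ⟨z, hz.symm⟩)
      exact ⟨⟨w, hw⟩, Subtype.ext h⟩
  exact ⟨Q, rfl, .trans _ _ _ (.symm _ _ (.rel _ _ ⟨f, hf⟩)) (.rel _ _ ⟨g, hg⟩)⟩
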